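/- arXiv:math/0412502 — 6 statements merged into one kernel-verified Lean document; each statement's English description precedes it below -/
import Mathlib

section
/- Let V and W be finite-dimensional real vector spaces, i : W → V a linear map, and L a linear Dirac structure on V. Then the pullback i*L := {Y ⊕ (ξ ∘ i) : Y ∈ W, ξ ∈ V*, i(Y) ⊕ ξ ∈ L} is a linear Dirac structure on W. -/
noncomputable section

open Module

variable {V : Type} [AddCommGroup V] [Module ℝ V] [FiniteDimensional ℝ V]

/-- The symmetric pairing `⟨X₁⊕ξ₁, X₂⊕ξ₂⟩₊ = (1/2)(ξ₁(X₂) + ξ₂(X₁))` on `V ⊕ V*`. -/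
def diracPairing (a b : V × Module.Dual ℝ V) : ℝ :=
  (1 / 2) * (a.2 b.1 + b.2 a.1)

/-- A subspace of `V ⊕ V*` is isotropic if the pairing vanishes on all pairs of its elements. -/
def IsIsotropic (L : Submodule ℝ (V × Module.Dual ℝ V)) : Prop :=
  ∀ a ∈ L, ∀ b ∈ L, diracPairing a b = 0

/-- A linear Dirac structure on `V`: an isotropic subspace of `V ⊕ V*` that is maximal
among isotropic subspaces. -/
def IsDirac (L : Submodule ℝ (V × Module.Dual ℝ V)) : Prop :=
  IsIsotropic L ∧
    ∀ L' : Submodule ℝ (V × Module.Dual ℝ V), IsIsotropic L' → L ≤ L' → L' = L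

/-!
Maximal isotropic subspaces of `V ⊕ V*` are exactly the subspaces equal to their own orthogonal, in
any dimension. Indeed, let `(x, ξ)` be orthogonal to a maximal isotropic `L`, and let `pr` be the
projection to `V`. By maximality `L` contains every `(0, η)` with `η` vanishing on `pr L`, so all
such `η` vanish at `x`, and therefore `x ∈ pr L`. Hence `(x, ξ)` differs from an element of `L` by
some `(0, η)` orthogonal to `L`, which again lies in `L`.

Moreover `(i*L)^⊥ = i*(L^⊥)` for every subspace `L`: a functional on `W` and a functional on `L`
that agree over `V` come from a common functional on `V`.
-/

/-- A submodule is maximal isotropic for a bilinear form if it is maximal among the submodules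
contained in their own orthogonal. For `canonicalPairing` these are the linear Dirac structures. -/
def IsMaximalIsotropic {R M : Type*} [CommSemiring R] [AddCommMonoid M] [Module R M]
    (B : LinearMap.BilinForm R M) (N : Submodule R M) : Prop :=
  Maximal (fun P ↦ P ≤ B.orthogonal P) N

namespace IsMaximalIsotropic

variable {R M : Type*} [CommSemiring R] [AddCommMonoid M] [Module R M]
  {B : LinearMap.BilinForm R M} {N : Submodule R M}

theorem of_orthogonal_eq (h : B.orthogonal N = N) : IsMaximalIsotropic B N :=
  ⟨h.ge, fun _ hP hNP ↦ hP.trans ((LinearMap.BilinForm.orthogonal_le hNP).trans h.le)⟩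

theorem mem_of_mem_orthogonal (hN : IsMaximalIsotropic B N) (hB : B.IsRefl) {x : M}
    (hx : x ∈ B.orthogonal N) (hxx : B x x = 0) : x ∈ N := by
  have hsup : N ⊔ R ∙ x ≤ B.orthogonal (N ⊔ R ∙ x) := by
    intro a ha b hb
    obtain ⟨n, hn, _, hs, rfl⟩ := Submodule.mem_sup.1 ha
    obtain ⟨m, hm, _, ht, rfl⟩ := Submodule.mem_sup.1 hb
    obtain ⟨s, rfl⟩ := Submodule.mem_span_singleton.1 hs
    obtain ⟨t, rfl⟩ := Submodule.mem_span_singleton.1 ht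
    have hnm : B m n = 0 := hN.prop hn m hm
    have hmx : B m x = 0 := hx m hm
    have hxn : B x n = 0 := hB _ _ (hx n hn)
    simp [hnm, hmx, hxn, hxx]
  exact hN.le_of_ge hsup le_sup_left
    (Submodule.mem_sup_right (Submodule.mem_span_singleton_self x))

end IsMaximalIsotropic

section CanonicalPairing

variable (R M : Type*) [CommSemiring R] [AddCommMonoid M] [Module R M]

/-- The canonical symmetric pairing of `M ⊕ M*`. Over `ℝ` it is twice `diracPairing`, so both
have the same isotropic subspaces; without the factor `1 / 2` it makes sense over every commutative
semiring. -/
def canonicalPairing : LinearMap.BilinForm R (M × Dual R M) :=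
  (LinearMap.dualProd R M).compl₁₂ (LinearEquiv.prodComm R M (Dual R M)).toLinearMap
    (LinearEquiv.prodComm R M (Dual R M)).toLinearMap

variable {R M}

@[simp]
theorem canonicalPairing_apply (a b : M × Dual R M) :
    canonicalPairing R M a b = b.2 a.1 + a.2 b.1 := by
  simp [canonicalPairing]

variable (R M) in
theorem canonicalPairing_isSymm : (canonicalPairing R M).IsSymm :=
  ⟨fun a b ↦ by simp [add_comm]⟩

theorem zero_prod_mem_orthogonal_canonicalPairing_iff {L : Submodule R (M × Dual R M)}
    {η : Dual R M} :
    (0, η) ∈ (canonicalPairing R M).orthogonal L ↔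
      η ∈ (L.map (LinearMap.fst R M (Dual R M))).dualAnnihilator := by
  simp [LinearMap.BilinForm.mem_orthogonal_iff, Submodule.mem_dualAnnihilator]

theorem IsMaximalIsotropic.zero_prod_mem {L : Submodule R (M × Dual R M)}
    (hL : IsMaximalIsotropic (canonicalPairing R M) L) {η : Dual R M}
    (hη : (0, η) ∈ (canonicalPairing R M).orthogonal L) : (0, η) ∈ L :=
  hL.mem_of_mem_orthogonal (canonicalPairing_isSymm R M).isRefl hη (by simp)

variable {N : Type*} [AddCommMonoid N] [Module R N]

/-- The pullback `{(y, ξ ∘ i) | (i y, ξ) ∈ L}` of a submodule `L` of `M ⊕ M*` along `i : N → M`,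
as the image of `L` under the correspondence `M ⊕ M* ← N ⊕ M* → N ⊕ N*`. -/
def diracPullback (i : N →ₗ[R] M) (L : Submodule R (M × Dual R M)) :
    Submodule R (N × Dual R N) :=
  (L.comap (i.prodMap LinearMap.id)).map (LinearMap.id.prodMap i.dualMap)

theorem mem_diracPullback {i : N →ₗ[R] M} {L : Submodule R (M × Dual R M)}
    {z : N × Dual R N} :
    z ∈ diracPullback i L ↔ ∃ (y : N) (ξ : Dual R M), (i y, ξ) ∈ L ∧ z = (y, ξ.comp i) := by
  simp [diracPullback, LinearMap.dualMap_apply', eq_comm]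

theorem diracPullback_orthogonal_le (i : N →ₗ[R] M) (L : Submodule R (M × Dual R M)) :
    diracPullback i ((canonicalPairing R M).orthogonal L) ≤
      (canonicalPairing R N).orthogonal (diracPullback i L) := by
  intro a ha b hb
  obtain ⟨y, ξ, hξ, rfl⟩ := mem_diracPullback.1 ha
  obtain ⟨z, η, hη, rfl⟩ := mem_diracPullback.1 hb
  simpa using hξ (i z, η) hη

end CanonicalPairing

section Field

variable {K E F : Type*} [Field K] [AddCommGroup E] [Module K E] [AddCommGroup F] [Module K F]

theorem exists_dual_comp_eq_and_comp_eq {G : Type*} [AddCommGroup G] [Module K G]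
    (f : F →ₗ[K] E) (g : G →ₗ[K] E) (φ : Dual K F) (ψ : Dual K G)
    (h : ∀ x y, f x = g y → φ x = ψ y) :
    ∃ ξ : Dual K E, ξ.comp f = φ ∧ ξ.comp g = ψ := by
  have hker : φ.coprod ψ ∈ (LinearMap.ker (f.coprod g)).dualAnnihilator := by
    refine (Submodule.mem_dualAnnihilator _).2 fun ⟨x, y⟩ hxy ↦ ?_
    have hfg : f x = g (-y) := by
      rw [map_neg]
      exact eq_neg_of_add_eq_zero_left hxy
    simp [h x (-y) hfg]
  rw [← LinearMap.range_dualMap_eq_dualAnnihilator_ker] at hker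
  obtain ⟨ξ, hξ⟩ := hker
  refine ⟨ξ, LinearMap.ext fun x ↦ ?_, LinearMap.ext fun y ↦ ?_⟩
  · simpa using LinearMap.congr_fun hξ (x, 0)
  · simpa using LinearMap.congr_fun hξ (0, y)

theorem orthogonal_diracPullback (i : F →ₗ[K] E) (L : Submodule K (E × Dual K E)) :
    (canonicalPairing K F).orthogonal (diracPullback i L) =
      diracPullback i ((canonicalPairing K E).orthogonal L) := by
  refine le_antisymm ?_ (diracPullback_orthogonal_le i L)
  rintro ⟨y, β⟩ hyβ
  have hβ (z : F) (η : Dual K E) (hη : (i z, η) ∈ L) : β z + η (i y) = 0 := by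
    simpa using hyβ _ (mem_diracPullback.2 ⟨z, η, hη, rfl⟩)
  let base : L →ₗ[K] E := LinearMap.fst K E (Dual K E) ∘ₗ L.subtype
  let evalAt : Dual K L := Dual.eval K E (i y) ∘ₗ LinearMap.snd K E (Dual K E) ∘ₗ L.subtype
  have hagree (z : F) (a : L) (hza : i z = base a) : β z = (-evalAt) a :=
    eq_neg_of_add_eq_zero_left (hβ z a.1.2 (hza ▸ a.2))
  obtain ⟨ξ, hξi, hξL⟩ := exists_dual_comp_eq_and_comp_eq (G := L) i base β (-evalAt) hagree
  refine mem_diracPullback.2 ⟨y, ξ, fun a ha ↦ ?_, by rw [hξi]⟩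
  have hξa : ξ a.1 = -a.2 (i y) := LinearMap.congr_fun hξL ⟨a, ha⟩
  simp [hξa]

namespace IsMaximalIsotropic

variable {L : Submodule K (E × Dual K E)}

theorem fst_mem_map_fst (hL : IsMaximalIsotropic (canonicalPairing K E) L) {a : E × Dual K E}
    (ha : a ∈ (canonicalPairing K E).orthogonal L) :
    a.1 ∈ L.map (LinearMap.fst K E (Dual K E)) := by
  rw [← Subspace.forall_mem_dualAnnihilator_apply_eq_zero_iff]
  intro η hη
  simpa using ha _ (hL.zero_prod_mem (zero_prod_mem_orthogonal_canonicalPairing_iff.2 hη))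

theorem orthogonal_canonicalPairing_eq (hL : IsMaximalIsotropic (canonicalPairing K E) L) :
    (canonicalPairing K E).orthogonal L = L := by
  refine le_antisymm (fun a ha ↦ ?_) hL.prop
  obtain ⟨x, ξ⟩ := a
  obtain ⟨⟨_, η⟩, hη, rfl⟩ := hL.fst_mem_map_fst ha
  have hsub : (0, ξ - η) ∈ (canonicalPairing K E).orthogonal L := by
    simpa using sub_mem ha (hL.prop hη)
  simpa using add_mem (hL.zero_prod_mem hsub) hη

end IsMaximalIsotropic

theorem dirac_pullback_general (i : F →ₗ[K] E) {L : Submodule K (E × Dual K E)}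
    (hL : IsMaximalIsotropic (canonicalPairing K E) L) :
    IsMaximalIsotropic (canonicalPairing K F) (diracPullback i L) :=
  .of_orthogonal_eq (by rw [orthogonal_diracPullback, hL.orthogonal_canonicalPairing_eq])

end Field

omit [FiniteDimensional ℝ V] in
theorem isIsotropic_iff_le_orthogonal {L : Submodule ℝ (V × Dual ℝ V)} :
    IsIsotropic L ↔ L ≤ (canonicalPairing ℝ V).orthogonal L := by
  have hpair (a b : V × Dual ℝ V) : diracPairing a b = 0 ↔ canonicalPairing ℝ V b a = 0 := by
    simp [diracPairing]
  exact forall₂_congr fun a _ ↦ forall₂_congr fun b _ ↦ hpair a b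

omit [FiniteDimensional ℝ V] in
theorem isDirac_iff_isMaximalIsotropic {L : Submodule ℝ (V × Dual ℝ V)} :
    IsDirac L ↔ IsMaximalIsotropic (canonicalPairing ℝ V) L := by
  simp only [IsDirac, IsMaximalIsotropic, maximal_iff, isIsotropic_iff_le_orthogonal,
    eq_comm (a := L)]

/-- The pullback `i*L = {Y ⊕ (ξ ∘ i) : i(Y) ⊕ ξ ∈ L}` of a linear Dirac
structure `L` on `V` along a linear map `i : W → V` is a linear Dirac structure on `W`. -/
theorem dirac_pullback {W : Type} [AddCommGroup W] [Module ℝ W] [FiniteDimensional ℝ W]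
    (i : W →ₗ[ℝ] V) (L : Submodule ℝ (V × Module.Dual ℝ V)) (hL : IsDirac L)
    (L' : Submodule ℝ (W × Module.Dual ℝ W))
    (hL' : (L' : Set (W × Module.Dual ℝ W)) =
      {z | ∃ (Y : W) (ξ : Module.Dual ℝ V), (i Y, ξ) ∈ L ∧ z = (Y, ξ.comp i)}) :
    IsDirac L' := by
  obtain rfl : L' = diracPullback i L :=
    SetLike.ext fun z ↦ (Set.ext_iff.1 hL' z).trans mem_diracPullback.symm
  rw [isDirac_iff_isMaximalIsotropic] at hL ⊢
  exact dirac_pullback_general i hL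
end
end

section
/- Let V be a finite-dimensional real vector space, Λ : V* × V* → ℝ a skew-symmetric bilinear form with induced map Λ̃ : V* → V (characterized by η(Λ̃ξ) = Λ(η, ξ) for all η, ξ ∈ V*), and E ∈ V. Then the subspace {(Λ̃ξ − gE, ξ(E)) ⊕ (ξ, g) : ξ ∈ V*, g ∈ ℝ} of (V × ℝ) ⊕ (V* × ℝ) is a linear Dirac-Jacobi structure on V. -/
noncomputable section

open Module

variable {V : Type} [AddCommGroup V] [Module ℝ V] [FiniteDimensional ℝ V]

/-- The symmetric pairing on `(V × ℝ) ⊕ (V* × ℝ)`: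
`⟨(X₁,f₁)⊕(ξ₁,g₁), (X₂,f₂)⊕(ξ₂,g₂)⟩₊ = (1/2)(ξ₁(X₂) + ξ₂(X₁) + g₁f₂ + g₂f₁)`. -/
def djPairing (a b : (V × ℝ) × (Module.Dual ℝ V × ℝ)) : ℝ :=
  (1 / 2) * (a.2.1 b.1.1 + b.2.1 a.1.1 + a.2.2 * b.1.2 + b.2.2 * a.1.2)

/-- A subspace of `(V × ℝ) ⊕ (V* × ℝ)` is isotropic if the pairing vanishes on all pairs. -/
def IsIsotropicJ (L : Submodule ℝ ((V × ℝ) × (Module.Dual ℝ V × ℝ))) : Prop :=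
  ∀ a ∈ L, ∀ b ∈ L, djPairing a b = 0

/-- A linear Dirac-Jacobi structure on `V`: a maximal isotropic subspace of
`(V × ℝ) ⊕ (V* × ℝ)`. -/
def IsDiracJacobi (L : Submodule ℝ ((V × ℝ) × (Module.Dual ℝ V × ℝ))) : Prop :=
  IsIsotropicJ L ∧
    ∀ L' : Submodule ℝ ((V × ℝ) × (Module.Dual ℝ V × ℝ)), IsIsotropicJ L' → L ≤ L' → L' = L

/-!
The subspace is the graph of `J (ξ, g) = (Λ̃ξ - gE, ξ E)`, which is skew for the pairing of `V* × ℝ`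
with `V × ℝ`. Skewness turns orthogonality of `(x, b)` to all `(J a, a)` into `⟨a, x - J b⟩ = 0` for
all `a`, that is, into `x = J b`. The graph is thus its own orthogonal complement, and a subspace
with this property contains every isotropic subspace above it.
-/

section Isotropic

variable {R M : Type*} [CommSemiring R] [AddCommMonoid M] [Module R M]

/-- A submodule is totally isotropic for a bilinear form if the form vanishes on all pairs of its
elements, phrased through Mathlib's orthogonal complement. -/
def IsTotallyIsotropic (B : LinearMap.BilinForm R M) (L : Submodule R M) : Prop :=
  L ≤ L.orthogonalBilin B

theorem maximal_isTotallyIsotropic_of_orthogonalBilin_eq {B : LinearMap.BilinForm R M}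
    {L : Submodule R M} (hL : L.orthogonalBilin B = L) : Maximal (IsTotallyIsotropic B) L :=
  ⟨hL.ge, fun _ hL' hle ↦ hL'.trans ((Submodule.orthogonalBilin_le hle).trans hL.le)⟩

end Isotropic

section HyperbolicForm

variable {R M N : Type*} [CommSemiring R] [AddCommMonoid M] [Module R M] [AddCommMonoid N]
  [Module R N]

/-- The symmetric form on `M × N` induced by a pairing `p` of `N` with `M`. It omits the factor
`1 / 2` of `djPairing`, so that it makes sense over every coefficient ring. -/
def hyperbolicForm (p : N →ₗ[R] M →ₗ[R] R) : LinearMap.BilinForm R (M × N) :=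
  p.compl₁₂ (.snd R M N) (.fst R M N) + (p.compl₁₂ (.snd R M N) (.fst R M N)).flip

theorem hyperbolicForm_apply (p : N →ₗ[R] M →ₗ[R] R) (z w : M × N) :
    hyperbolicForm p z w = p z.2 w.1 + p w.2 z.1 :=
  rfl

/-- The graph of a map `J : N → M` with the value of `J` in the first factor; the two factors are
swapped compared with `LinearMap.graph`. -/
def swappedGraph (J : N →ₗ[R] M) : Submodule R (M × N) :=
  LinearMap.range (J.prod .id)

theorem mem_swappedGraph {J : N →ₗ[R] M} {z : M × N} : z ∈ swappedGraph J ↔ J z.2 = z.1 := by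
  simp [swappedGraph, Prod.ext_iff]

theorem mem_orthogonalBilin_swappedGraph {p : N →ₗ[R] M →ₗ[R] R} {J : N →ₗ[R] M} {z : M × N} :
    z ∈ (swappedGraph J).orthogonalBilin (hyperbolicForm p) ↔
      ∀ a, p a z.1 + p z.2 (J a) = 0 := by
  simp [swappedGraph, hyperbolicForm_apply]

end HyperbolicForm

theorem orthogonalBilin_swappedGraph_eq_self {R M N : Type*} [CommRing R] [AddCommGroup M]
    [Module R M] [AddCommMonoid N] [Module R N] {p : N →ₗ[R] M →ₗ[R] R} (hp : p.SeparatingRight)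
    {J : N →ₗ[R] M} (hJ : ∀ a b, p a (J b) = -p b (J a)) :
    (swappedGraph J).orthogonalBilin (hyperbolicForm p) = swappedGraph J := by
  ext ⟨x, b⟩
  have pairing_eq (a : N) : p a x + p b (J a) = p a (x - J b) := by
    rw [hJ b a, map_sub, sub_eq_add_neg]
  simp only [mem_orthogonalBilin_swappedGraph, mem_swappedGraph, pairing_eq]
  constructor
  · intro h
    exact (sub_eq_zero.mp (hp _ h)).symm
  · rintro rfl a
    rw [sub_self, map_zero]

section JacobiPairing

/-- The pairing `⟨(ξ, g), (X, f)⟩ = ξ(X) + g f` of `M* × R` with `M × R`, the hyperbolic form of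
which is twice the Dirac-Jacobi pairing. -/
def jacobiPairing (R M : Type*) [CommSemiring R] [AddCommMonoid M] [Module R M] :
    (Module.Dual R M × R) →ₗ[R] (M × R) →ₗ[R] R :=
  LinearMap.compl₁₂ .id (.fst R _ R) (.fst R M R) +
    (LinearMap.mul R R).compl₁₂ (.snd R _ R) (.snd R M R)

theorem jacobiPairing_apply {R M : Type*} [CommSemiring R] [AddCommMonoid M] [Module R M]
    (α : Module.Dual R M × R) (x : M × R) : jacobiPairing R M α x = α.1 x.1 + α.2 * x.2 :=
  rfl

theorem separatingRight_jacobiPairing {R M : Type*} [CommSemiring R] [AddCommMonoid M] [Module R M]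
    (hM : (LinearMap.id : Module.Dual R M →ₗ[R] M →ₗ[R] R).SeparatingRight) :
    (jacobiPairing R M).SeparatingRight := by
  rintro ⟨X, f⟩ h
  have hX : X = 0 := hM X fun ξ ↦ by simpa [jacobiPairing_apply] using h (ξ, 0)
  have hf : f = 0 := by simpa [jacobiPairing_apply] using h (0, 1)
  rw [hX, hf, Prod.mk_zero_zero]

variable {R M : Type*} [CommRing R] [AddCommGroup M] [Module R M]

/-- The map `(ξ, g) ↦ (Λ̃ξ - gE, ξ(E))` associated with a bivector `Λ` and a vector `E`, where `Λt`
is `Λ̃`. -/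
def jacobiMap (Λt : Module.Dual R M →ₗ[R] M) (E : M) : (Module.Dual R M × R) →ₗ[R] M × R :=
  (Λt.coprod (-LinearMap.toSpanSingleton R M E)).prod (Module.Dual.eval R M E ∘ₗ .fst R _ R)

theorem jacobiMap_apply (Λt : Module.Dual R M →ₗ[R] M) (E : M) (α : Module.Dual R M × R) :
    jacobiMap Λt E α = (Λt α.1 - α.2 • E, α.1 E) := by
  simp [jacobiMap, sub_eq_add_neg]

theorem jacobiPairing_jacobiMap_eq_neg {Λt : Module.Dual R M →ₗ[R] M}
    (hΛt : ∀ η ξ : Module.Dual R M, η (Λt ξ) = -ξ (Λt η)) (E : M) (α β : Module.Dual R M × R) :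
    jacobiPairing R M α (jacobiMap Λt E β) = -jacobiPairing R M β (jacobiMap Λt E α) := by
  simp only [jacobiPairing_apply, jacobiMap_apply, map_sub, map_smul, smul_eq_mul, hΛt α.1 β.1]
  ring

end JacobiPairing

section DiracJacobi

variable {W : Type} [AddCommGroup W] [Module ℝ W]

theorem hyperbolicForm_jacobiPairing_eq_two_mul_djPairing
    (a b : (W × ℝ) × (Module.Dual ℝ W × ℝ)) :
    hyperbolicForm (jacobiPairing ℝ W) a b = 2 * djPairing a b := by
  simp only [hyperbolicForm_apply, jacobiPairing_apply, djPairing]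
  ring

theorem isIsotropicJ_iff_isTotallyIsotropic
    {L : Submodule ℝ ((W × ℝ) × (Module.Dual ℝ W × ℝ))} :
    IsIsotropicJ L ↔ IsTotallyIsotropic (hyperbolicForm (jacobiPairing ℝ W)) L := by
  simp only [IsTotallyIsotropic, SetLike.le_def, Submodule.mem_orthogonalBilin_iff,
    hyperbolicForm_jacobiPairing_eq_two_mul_djPairing, mul_eq_zero, two_ne_zero, false_or]
  exact ⟨fun h b hb a ha ↦ h a ha b hb, fun h a ha b hb ↦ h hb a ha⟩

theorem isDiracJacobi_iff_maximal {L : Submodule ℝ ((W × ℝ) × (Module.Dual ℝ W × ℝ))} :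
    IsDiracJacobi L ↔ Maximal (IsTotallyIsotropic (hyperbolicForm (jacobiPairing ℝ W))) L := by
  simp only [IsDiracJacobi, maximal_iff, isIsotropicJ_iff_isTotallyIsotropic, eq_comm]

end DiracJacobi

theorem dirac_jacobi_graph_of_jacobi_general {R M : Type*} [CommRing R] [AddCommGroup M]
    [Module R M] (hM : (LinearMap.id : Module.Dual R M →ₗ[R] M →ₗ[R] R).SeparatingRight)
    (Λ : Module.Dual R M →ₗ[R] Module.Dual R M →ₗ[R] R)
    (hskew : ∀ η ξ : Module.Dual R M, Λ η ξ = -Λ ξ η)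
    (Λt : Module.Dual R M →ₗ[R] M) (hΛt : ∀ η ξ : Module.Dual R M, η (Λt ξ) = Λ η ξ) (E : M)
    (L : Submodule R ((M × R) × (Module.Dual R M × R)))
    (hLc : (L : Set ((M × R) × (Module.Dual R M × R))) =
      {z | ∃ (ξ : Module.Dual R M) (g : R), z = ((Λt ξ - g • E, ξ E), (ξ, g))}) :
    Maximal (IsTotallyIsotropic (hyperbolicForm (jacobiPairing R M))) L := by
  have L_eq_graph : L = swappedGraph (jacobiMap Λt E) := by
    ext ⟨x, ξ, g⟩
    rw [← SetLike.mem_coe, hLc, mem_swappedGraph, jacobiMap_apply]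
    constructor
    · rintro ⟨_, _, ⟨⟩⟩
      rfl
    · intro h
      exact ⟨ξ, g, Prod.ext h.symm rfl⟩
  have Λt_skew (η ξ : Module.Dual R M) : η (Λt ξ) = -ξ (Λt η) := by
    rw [hΛt, hΛt, hskew]
  rw [L_eq_graph]
  exact maximal_isTotallyIsotropic_of_orthogonalBilin_eq <|
    orthogonalBilin_swappedGraph_eq_self (separatingRight_jacobiPairing hM)
      (jacobiPairing_jacobiMap_eq_neg Λt_skew E)

/-- For a skew-symmetric bilinear form `Λ` on `V*` with induced map
`Λ̃ : V* → V` (so `η(Λ̃ξ) = Λ(η,ξ)`) and a vector `E ∈ V`, the subspace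
`{(Λ̃ξ − gE, ξ(E)) ⊕ (ξ, g) : ξ ∈ V*, g ∈ ℝ}` is a linear Dirac-Jacobi structure on `V`. -/
theorem dirac_jacobi_graph_of_jacobi (Λ : Module.Dual ℝ V →ₗ[ℝ] Module.Dual ℝ V →ₗ[ℝ] ℝ)
    (hskew : ∀ η ξ : Module.Dual ℝ V, Λ η ξ = - Λ ξ η)
    (Λt : Module.Dual ℝ V →ₗ[ℝ] V)
    (hΛt : ∀ η ξ : Module.Dual ℝ V, η (Λt ξ) = Λ η ξ)
    (E : V)
    (L : Submodule ℝ ((V × ℝ) × (Module.Dual ℝ V × ℝ)))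
    (hLc : (L : Set ((V × ℝ) × (Module.Dual ℝ V × ℝ))) =
      {z | ∃ (ξ : Module.Dual ℝ V) (g : ℝ), z = ((Λt ξ - g • E, ξ E), (ξ, g))}) :
    IsDiracJacobi L := by
  exact isDiracJacobi_iff_maximal.mpr <|
    dirac_jacobi_graph_of_jacobi_general LinearMap.id_separatingRight Λ hskew Λt hΛt E L hLc
end
end

section
/- Let L be a linear Dirac structure on a finite-dimensional real vector space V and let β : L → ℝ be a linear functional. Then: (a) there exists an element A ⊕ α ∈ V ⊕ V* with α(A) = 0 such that β(X ⊕ ξ) = α(X) + ξ(A) (= 2⟨A⊕α, X⊕ξ⟩₊) for all X ⊕ ξ ∈ L; (b) if A ⊕ α is one such element, then an element A′ ⊕ α′ ∈ V ⊕ V* satisfies the same two conditions (α′(A′) = 0 and β(X⊕ξ) = α′(X) + ξ(A′) on L) if and only if A′ ⊕ α′ = A ⊕ α + Y ⊕ η for some Y ⊕ η ∈ L with β(Y ⊕ η) = 0. -/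
/-!
Write `Q (A, α) = α A` for the tautological quadratic form on `V × V*`. Its polar form is
`α X + ξ A`, twice the pairing, so a Dirac structure is a maximal totally singular subspace `L` of
`Q`. By maximality it contains every `(0, ξ)` with `ξ` vanishing on its projection to `V`; hence a
vector orthogonal to `L` has its first component in that projection, and subtracting an element of
`L` with the same first component leaves such a `(0, ξ)`. Thus `Lᗮ = L`.

As the polar form is nonsingular, any extension of `β` to `V × V*` is the polar form with some
vector `u`. Adding `y ∈ L` to `u` does not change the functional represented on `L`, and changes
`Q u` by `β y`; so if `β ≠ 0`, a suitable `y` makes `Q u` vanish. Two representing vectors differ by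
an element `y` of `Lᗮ = L`, and the same formula `Q (u + y) = Q u + β y` shows that, when `u` is
singular, `u + y` is singular exactly if `β y = 0`.
-/

noncomputable section

open Module

variable {V : Type} [AddCommGroup V] [Module ℝ V] [FiniteDimensional ℝ V]

open QuadraticMap

section QuadraticModule

variable {R E : Type*} [CommRing R] [AddCommGroup E] [Module R E]
  {Q : QuadraticForm R E} {L : Submodule R E} {β : Dual R L} {u v : E}

/-- A totally singular submodule of a quadratic module: the form vanishes on it. When `2` is not a
zero divisor, this amounts to being isotropic for the polar form. -/
def IsTotallySingular (Q : QuadraticForm R E) (L : Submodule R E) : Prop :=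
  ∀ z ∈ L, Q z = 0

/-- The vector `u` represents the functional `β` on `L` through the polar form of `Q`. For
`Q (A, α) = α A` and `u = (A, α)`, this is the condition `β (X, ξ) = α X + ξ A` on `L`. -/
def Represents (Q : QuadraticForm R E) (β : Dual R L) (u : E) : Prop :=
  ∀ z : L, β z = polar Q u z

theorem IsTotallySingular.polar_eq_zero (hL : IsTotallySingular Q L) {x y : E} (hx : x ∈ L)
    (hy : y ∈ L) : polar Q x y = 0 := by
  simp [polar, hL x hx, hL y hy, hL _ (L.add_mem hx hy)]

theorem IsTotallySingular.sup_span_singleton (hL : IsTotallySingular Q L) (hu : Q u = 0)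
    (hort : u ∈ L.orthogonalBilin Q.polarBilin) : IsTotallySingular Q (L ⊔ R ∙ u) := by
  intro w hw
  obtain ⟨z, hz, y, hy, rfl⟩ := Submodule.mem_sup.mp hw
  obtain ⟨c, rfl⟩ := Submodule.mem_span_singleton.mp hy
  have hzu : polar Q z u = 0 := hort z hz
  simp [QuadraticMap.map_add Q, QuadraticMap.map_smul, hL z hz, hu, hzu]

theorem mem_of_maximal_isTotallySingular (hL : Maximal (IsTotallySingular Q) L) (hu : Q u = 0)
    (hort : u ∈ L.orthogonalBilin Q.polarBilin) : u ∈ L :=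
  hL.le_of_ge (hL.prop.sup_span_singleton hu hort) le_sup_left
    (Submodule.mem_sup_right (Submodule.mem_span_singleton_self u))

theorem Represents.add_coe (hu : Represents Q β u) (hL : IsTotallySingular Q L) (y : L) :
    Represents Q β (u + y) := by
  intro z
  rw [polar_add_left, hL.polar_eq_zero y.2 z.2, add_zero, hu z]

theorem Represents.map_add_coe (hu : Represents Q β u) (hL : IsTotallySingular Q L) (y : L) :
    Q (u + y) = Q u + β y := by
  rw [QuadraticMap.map_add Q, hL y y.2, add_zero, hu y]

theorem Represents.sub_mem_orthogonalBilin (hu : Represents Q β u) (hv : Represents Q β v) :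
    v - u ∈ L.orthogonalBilin Q.polarBilin := by
  intro z hz
  change polar Q z (v - u) = 0
  rw [polar_comm, polar_sub_left, ← hv ⟨z, hz⟩, ← hu ⟨z, hz⟩, sub_self]

theorem Represents.singular_represents_iff (hu : Represents Q β u) (hQu : Q u = 0)
    (hL : IsTotallySingular Q L) (hort : L.orthogonalBilin Q.polarBilin ≤ L) :
    (Q v = 0 ∧ Represents Q β v) ↔ ∃ y : L, β y = 0 ∧ v = u + y := by
  constructor
  · rintro ⟨hQv, hv⟩
    let y : L := ⟨v - u, hort (hu.sub_mem_orthogonalBilin hv)⟩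
    have hvy : v = u + y := (add_sub_cancel u v).symm
    refine ⟨y, ?_, hvy⟩
    simpa [← hvy, hQv, hQu] using (hu.map_add_coe hL y).symm
  · rintro ⟨y, hy, rfl⟩
    exact ⟨by rw [hu.map_add_coe hL, hQu, hy, add_zero], hu.add_coe hL y⟩

end QuadraticModule

section QuadraticSpace

variable {K E : Type*} [Field K] [AddCommGroup E] [Module K E]
  {Q : QuadraticForm K E} {L : Submodule K E}

theorem exists_represents (hQ : Function.Surjective Q.polarBilin) (β : Dual K L) :
    ∃ u, Represents Q β u := by
  obtain ⟨f, rfl⟩ := β.exists_extend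
  obtain ⟨u, rfl⟩ := hQ f
  exact ⟨u, fun _ => rfl⟩

theorem exists_singular_represents (hQ : Function.Surjective Q.polarBilin)
    (hL : IsTotallySingular Q L) (β : Dual K L) : ∃ u, Q u = 0 ∧ Represents Q β u := by
  obtain rfl | hβ := eq_or_ne β 0
  · exact ⟨0, map_zero Q, fun z => by simp⟩
  obtain ⟨u, hu⟩ := exists_represents hQ β
  obtain ⟨y, hy⟩ : ∃ y : L, β y = -Q u := LinearMap.surjective hβ _
  exact ⟨u + y, by rw [hu.map_add_coe hL, hy, add_neg_cancel], hu.add_coe hL y⟩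

end QuadraticSpace

section ProdDual

variable (R M : Type*) [CommRing R] [AddCommGroup M] [Module R M]

/-- The tautological quadratic form `(A, α) ↦ α A` on `M × M*`. It is Mathlib's
`QuadraticForm.dualProd` with the two factors exchanged. -/
def prodDualForm : QuadraticForm R (M × Dual R M) :=
  (QuadraticForm.dualProd R M).comp (LinearEquiv.prodComm R M (Dual R M)).toLinearMap

variable {R M}

@[simp]
theorem prodDualForm_apply (z : M × Dual R M) : prodDualForm R M z = z.2 z.1 := rfl

@[simp]
theorem polar_prodDualForm (u z : M × Dual R M) :
    polar (prodDualForm R M) u z = u.2 z.1 + z.2 u.1 := by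
  simp only [polar, prodDualForm_apply, Prod.fst_add, Prod.snd_add, map_add, LinearMap.add_apply]
  ring

theorem polarBilin_prodDualForm_surjective [IsReflexive R M] :
    Function.Surjective (prodDualForm R M).polarBilin := by
  intro f
  refine ⟨((evalEquiv R M).symm (f ∘ₗ LinearMap.inr R M (Dual R M)),
    f ∘ₗ LinearMap.inl R M (Dual R M)), LinearMap.ext fun z => ?_⟩
  simp [← map_add]

theorem inr_mem_of_maximal_isTotallySingular
    {L : Submodule R (M × Dual R M)} (hL : Maximal (IsTotallySingular (prodDualForm R M)) L)
    {ξ : Dual R M} (hξ : ∀ z ∈ L, ξ z.1 = 0) : ((0 : M), ξ) ∈ L :=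
  mem_of_maximal_isTotallySingular hL (by simp) fun z hz => by simp [hξ z hz]

end ProdDual

section VectorSpace

variable {K W : Type*} [Field K] [AddCommGroup W] [Module K W]
  {L : Submodule K (W × Dual K W)}

theorem fst_mem_map_of_mem_orthogonalBilin
    (hL : Maximal (IsTotallySingular (prodDualForm K W)) L) {u : W × Dual K W}
    (hu : u ∈ L.orthogonalBilin (prodDualForm K W).polarBilin) :
    u.1 ∈ L.map (LinearMap.fst K W (Dual K W)) := by
  by_contra hmem
  obtain ⟨ξ, hξu, hξ⟩ := Submodule.exists_le_ker_of_notMem hmem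
  have hξL : ((0 : W), ξ) ∈ L :=
    inr_mem_of_maximal_isTotallySingular hL fun z hz => hξ (Submodule.mem_map_of_mem hz)
  exact hξu (by simpa using hu _ hξL)

theorem orthogonalBilin_le_of_maximal_isTotallySingular
    (hL : Maximal (IsTotallySingular (prodDualForm K W)) L) :
    L.orthogonalBilin (prodDualForm K W).polarBilin ≤ L := by
  intro u hu
  obtain ⟨w, hwL, hwu : w.1 = u.1⟩ := fst_mem_map_of_mem_orthogonalBilin hL hu
  have hdiff : ((0 : W), u.2 - w.2) ∈ L := by
    refine inr_mem_of_maximal_isTotallySingular hL fun z hz => ?_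
    have hzu : z.2 u.1 + u.2 z.1 = 0 := by simpa using hu z hz
    have hzw : z.2 w.1 + w.2 z.1 = 0 := by simpa using hL.prop.polar_eq_zero hz hwL
    rw [hwu] at hzw
    simp only [LinearMap.sub_apply]
    linear_combination hzu - hzw
  have hu_eq : u = w + (0, u.2 - w.2) := by ext1 <;> simp [hwu]
  exact hu_eq ▸ L.add_mem hwL hdiff

theorem dirac_functional_representation_general [FiniteDimensional K W]
    (hL : Maximal (IsTotallySingular (prodDualForm K W)) L) (β : Dual K L) :
    (∃ u, prodDualForm K W u = 0 ∧ Represents (prodDualForm K W) β u) ∧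
    ∀ u, (prodDualForm K W u = 0 ∧ Represents (prodDualForm K W) β u) →
      ∀ v, (prodDualForm K W v = 0 ∧ Represents (prodDualForm K W) β v) ↔
        ∃ y : L, β y = 0 ∧ v = u + y :=
  ⟨exists_singular_represents polarBilin_prodDualForm_surjective hL.prop β,
    fun _ hu _ => hu.2.singular_represents_iff hu.1 hL.prop
      (orthogonalBilin_le_of_maximal_isTotallySingular hL)⟩

end VectorSpace

section Real

omit [FiniteDimensional ℝ V]

theorem diracPairing_eq_half_polar (a b : V × Dual ℝ V) :
    diracPairing a b = (1 / 2) * polar (prodDualForm ℝ V) a b := by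
  rw [polar_prodDualForm, diracPairing]

theorem isIsotropic_iff_isTotallySingular {L : Submodule ℝ (V × Dual ℝ V)} :
    IsIsotropic L ↔ IsTotallySingular (prodDualForm ℝ V) L := by
  constructor
  · intro hL z hz
    simpa [diracPairing_eq_half_polar, polar_self] using hL z hz z hz
  · intro hL a ha b hb
    rw [diracPairing_eq_half_polar, hL.polar_eq_zero ha hb, mul_zero]

theorem IsDirac.maximal_isTotallySingular {L : Submodule ℝ (V × Dual ℝ V)} (hL : IsDirac L) :
    Maximal (IsTotallySingular (prodDualForm ℝ V)) L :=
  ⟨isIsotropic_iff_isTotallySingular.mp hL.1, fun M hM hLM =>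
    (hL.2 M (isIsotropic_iff_isTotallySingular.mpr hM) hLM).le⟩

end Real

/-- For a linear functional `β` on a linear Dirac structure `L ⊆ V ⊕ V*`:
(a) there exists an isotropic element `A ⊕ α ∈ V ⊕ V*` (i.e. `α(A) = 0`) with
`β(X⊕ξ) = α(X) + ξ(A)` for all `X⊕ξ ∈ L`; (b) given one such `A ⊕ α`, an element
`A′ ⊕ α′` satisfies the same two conditions iff `A′ ⊕ α′ = A ⊕ α + Y ⊕ η` for some
`Y ⊕ η ∈ L` with `β(Y ⊕ η) = 0`. -/
theorem dirac_functional_representation (L : Submodule ℝ (V × Module.Dual ℝ V))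
    (hL : IsDirac L) (β : L →ₗ[ℝ] ℝ) :
    (∃ (A : V) (α : Module.Dual ℝ V), α A = 0 ∧
        ∀ z : L, β z = α (z : V × Module.Dual ℝ V).1 + (z : V × Module.Dual ℝ V).2 A) ∧
    ∀ (A : V) (α : Module.Dual ℝ V),
      (α A = 0 ∧ ∀ z : L, β z = α (z : V × Module.Dual ℝ V).1 + (z : V × Module.Dual ℝ V).2 A) →
      ∀ (A' : V) (α' : Module.Dual ℝ V),
        (α' A' = 0 ∧
            ∀ z : L, β z = α' (z : V × Module.Dual ℝ V).1 + (z : V × Module.Dual ℝ V).2 A') ↔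
        ∃ (Y : V) (η : Module.Dual ℝ V) (h : (Y, η) ∈ L),
          β ⟨(Y, η), h⟩ = 0 ∧ A' = A + Y ∧ α' = α + η := by
  simpa [Represents, Prod.ext_iff] using
    dirac_functional_representation_general hL.maximal_isTotallySingular β
end
end

section
/- Let L be a linear Dirac structure on a finite-dimensional real vector space V, and let A ⊕ α and A′ ⊕ α′ be elements of V ⊕ V* with α(A) = 0 and α′(A′) = 0 such that α(X) + ξ(A) = α′(X) + ξ(A′) for all X ⊕ ξ ∈ L. Then, with W = V × ℝ and W* identified with V* × ℝ, the subspace of (W × ℝ) ⊕ (W* × ℝ) spanned by {((X, α(X)+ξ(A)), 0) ⊕ ((ξ, 0), 0) : X ⊕ ξ ∈ L}, ((0, −1), 0) ⊕ ((0, 0), 1), and ((−A, 0), 1) ⊕ ((−α, 1), 0) coincides with the subspace spanned by {((X, α′(X)+ξ(A′)), 0) ⊕ ((ξ, 0), 0) : X ⊕ ξ ∈ L}, ((0, −1), 0) ⊕ ((0, 0), 1), and ((−A′, 0), 1) ⊕ ((−α′, 1), 0); i.e. the constructed subspace is independent of the choice of A ⊕ α. -/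
noncomputable section

open Module

variable {V : Type} [AddCommGroup V] [Module ℝ V] [FiniteDimensional ℝ V]

/-- The identification of `V* × ℝ` with the dual of `W = V × ℝ`:
`(ξ, c)` acts on `(X, t)` by `ξ(X) + c·t`. -/
def dualPair (ξ : Module.Dual ℝ V) (c : ℝ) : Module.Dual ℝ (V × ℝ) :=
  ξ.comp (LinearMap.fst ℝ V ℝ) + c • LinearMap.snd ℝ V ℝ

/-- The subspace of `(W × ℝ) ⊕ (W* × ℝ)`, `W = V × ℝ`, spanned by the three families
`{((X, α(X)+ξ(A)), 0) ⊕ ((ξ, 0), 0) : X⊕ξ ∈ L}`, `((0, −1), 0) ⊕ ((0, 0), 1)`, and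
`((−A, 0), 1) ⊕ ((−α, 1), 0)`. -/
def preqSpan (L : Submodule ℝ (V × Module.Dual ℝ V)) (A : V) (α : Module.Dual ℝ V) :
    Submodule ℝ ((((V × ℝ) × ℝ)) × (Module.Dual ℝ (V × ℝ) × ℝ)) :=
  Submodule.span ℝ
    ({z | ∃ (X : V) (ξ : Module.Dual ℝ V), (X, ξ) ∈ L ∧
        z = (((X, α X + ξ A), 0), (dualPair ξ 0, 0))} ∪
      {((((0 : V), (-1 : ℝ)), (0 : ℝ)), ((0 : Module.Dual ℝ (V × ℝ)), (1 : ℝ))),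
        (((-A, (0 : ℝ)), (1 : ℝ)), (dualPair (-α) 1, (0 : ℝ)))})

/-!
The functional `X ⊕ ξ ↦ α(X) + ξ(A)` is pairing with `A ⊕ α`, so two choices `A ⊕ α` and `A' ⊕ α'`
that agree on `L` differ by some `d = D ⊕ δ` orthogonal to `L`, hence by an element of `L`, because
a maximal isotropic subspace contains its orthogonal complement. As `A ⊕ α` and `A' ⊕ α'` have the
same norm and `d` is isotropic, `d` is orthogonal to `A' ⊕ α'` as well. Its lift
`((D, 0), 0) ⊕ ((δ, 0), 0)` therefore lies in the span built from `A' ⊕ α'`, and it is exactly the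
difference of the last generators of the two spans.
-/

section BilinForm

variable {R M : Type*} [CommSemiring R] [AddCommMonoid M] [Module R M]
  {B : LinearMap.BilinForm R M} {N P : Submodule R M}

theorem le_orthogonal_symm (hB : B.IsRefl) (h : P ≤ B.orthogonal N) : N ≤ B.orthogonal P :=
  (B.le_orthogonal_orthogonal hB).trans (B.orthogonal_le h)

theorem sup_le_orthogonal_sup (hB : B.IsRefl) (hN : N ≤ B.orthogonal N) (hP : P ≤ B.orthogonal P)
    (hNP : P ≤ B.orthogonal N) : N ⊔ P ≤ B.orthogonal (N ⊔ P) :=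
  sup_le (le_orthogonal_symm hB (sup_le hN hNP))
    (le_orthogonal_symm hB (sup_le (le_orthogonal_symm hB hNP) hP))

theorem span_singleton_le_orthogonal_self {x : M} (hx : B x x = 0) :
    Submodule.span R {x} ≤ B.orthogonal (Submodule.span R {x}) := by
  intro y hy z hz
  obtain ⟨a, rfl⟩ := Submodule.mem_span_singleton.1 hy
  obtain ⟨b, rfl⟩ := Submodule.mem_span_singleton.1 hz
  simp [hx]

theorem mem_of_maximal_le_orthogonal (hB : B.IsRefl)
    (hN : Maximal (fun P ↦ P ≤ B.orthogonal P) N) {x : M} (hx : x ∈ B.orthogonal N)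
    (hxx : B x x = 0) : x ∈ N := by
  have hsup : N ⊔ Submodule.span R {x} ≤ B.orthogonal (N ⊔ Submodule.span R {x}) :=
    sup_le_orthogonal_sup hB hN.prop (span_singleton_le_orthogonal_self hxx)
      ((Submodule.span_singleton_le_iff_mem x _).2 hx)
  exact hN.le_of_ge hsup le_sup_left
    (Submodule.mem_sup_right (Submodule.mem_span_singleton_self x))

end BilinForm

section SplitForm

/-- The split symmetric form `⟨X₁⊕ξ₁, X₂⊕ξ₂⟩ = ξ₁(X₂) + ξ₂(X₁)` on `E ⊕ E*`: Mathlib's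
`LinearMap.dualProd` with its two factors exchanged, which is twice `diracPairing`. It provides the
orthogonal complements of subspaces of `E ⊕ E*`. -/
def splitForm (R E : Type*) [CommSemiring R] [AddCommMonoid E] [Module R E] :
    LinearMap.BilinForm R (E × Dual R E) :=
  LinearMap.BilinForm.congr (LinearEquiv.prodComm R (Dual R E) E) (LinearMap.dualProd R E)

theorem splitForm_apply {R E : Type*} [CommSemiring R] [AddCommMonoid E] [Module R E]
    (a b : E × Dual R E) : splitForm R E a b = a.2 b.1 + b.2 a.1 := by
  simp [splitForm, add_comm]

theorem isRefl_splitForm (R E : Type*) [CommSemiring R] [AddCommMonoid E] [Module R E] :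
    (splitForm R E).IsRefl := fun a b h ↦ by
  rwa [splitForm_apply, add_comm, ← splitForm_apply]

variable {K E : Type*} [Field K] [AddCommGroup E] [Module K E] {L : Submodule K (E × Dual K E)}

theorem fst_mem_map_fst_of_mem_orthogonal
    (hL : Maximal (fun N ↦ N ≤ (splitForm K E).orthogonal N) L) {x : E × Dual K E}
    (hx : x ∈ (splitForm K E).orthogonal L) : x.1 ∈ L.map (LinearMap.fst K E (Dual K E)) := by
  by_contra hx₁
  obtain ⟨f, hfx, hf⟩ := Submodule.exists_le_ker_of_notMem hx₁
  have f_orthogonal : ((0, f) : E × Dual K E) ∈ (splitForm K E).orthogonal L := by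
    intro y hy
    have hfy : f y.1 = 0 := hf (Submodule.mem_map_of_mem hy)
    simp [splitForm_apply, hfy]
  have f_mem : ((0, f) : E × Dual K E) ∈ L :=
    mem_of_maximal_le_orthogonal (isRefl_splitForm K E) hL f_orthogonal (by simp [splitForm_apply])
  exact hfx (by simpa [splitForm_apply] using hx _ f_mem)

theorem orthogonal_le_of_maximal (hL : Maximal (fun N ↦ N ≤ (splitForm K E).orthogonal N) L) :
    (splitForm K E).orthogonal L ≤ L := by
  intro x hx
  obtain ⟨y, hy, hyx⟩ := fst_mem_map_fst_of_mem_orthogonal hL hx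
  have sub_fst : (x - y).1 = 0 := sub_eq_zero.2 hyx.symm
  have sub_mem : x - y ∈ L :=
    mem_of_maximal_le_orthogonal (isRefl_splitForm K E) hL (Submodule.sub_mem _ hx (hL.prop hy))
      (by simp only [splitForm_apply, sub_fst, map_zero, add_zero])
  exact (Submodule.sub_mem_iff_left L hy).1 sub_mem

end SplitForm

section Prequantization

variable {E : Type} [AddCommGroup E] [Module ℝ E] {L : Submodule ℝ (E × Dual ℝ E)}

theorem isIsotropic_iff_le_orthogonal_s13 : IsIsotropic L ↔ L ≤ (splitForm ℝ E).orthogonal L := by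
  have pairing_eq_zero_iff (a b : E × Dual ℝ E) : diracPairing a b = 0 ↔ splitForm ℝ E b a = 0 := by
    simp [diracPairing, splitForm_apply, add_comm]
  simp only [IsIsotropic, pairing_eq_zero_iff, SetLike.le_def,
    LinearMap.BilinForm.mem_orthogonal_iff]

theorem isDirac_iff_maximal :
    IsDirac L ↔ Maximal (fun N ↦ N ≤ (splitForm ℝ E).orthogonal N) L := by
  simp only [IsDirac, maximal_iff, isIsotropic_iff_le_orthogonal_s13, eq_comm]

theorem dualPair_add (ξ η : Dual ℝ E) (c d : ℝ) :
    dualPair (ξ + η) (c + d) = dualPair ξ c + dualPair η d := by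
  simp only [dualPair, LinearMap.add_comp, add_smul]
  abel

variable {A A' : E} {α α' : Dual ℝ E}

theorem preqSpan_le_of_sub_mem (hsub : (A' - A, α' - α) ∈ L) (hα : α A = α' A')
    (hβ : ∀ (X : E) (ξ : Dual ℝ E), (X, ξ) ∈ L → α X + ξ A = α' X + ξ A') :
    preqSpan L A α ≤ preqSpan L A' α' := by
  have sub_pairing : α' (A' - A) + (α' - α) A' = 0 := by
    have h := hβ _ _ hsub
    simp only [LinearMap.sub_apply, map_sub] at h ⊢
    linarith
  refine Submodule.span_le.2 ?_
  rintro _ (⟨X, ξ, hX, rfl⟩ | rfl | rfl)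
  · exact Submodule.subset_span (.inl ⟨X, ξ, hX, by rw [hβ X ξ hX]⟩)
  · exact Submodule.subset_span (.inr (.inl rfl))
  · have lift_mem : (((A' - A, (0 : ℝ)), (0 : ℝ)), (dualPair (α' - α) 0, (0 : ℝ))) ∈
        preqSpan L A' α' :=
      Submodule.subset_span (.inl ⟨_, _, hsub, by rw [sub_pairing]⟩)
    have generator_mem : (((-A', (0 : ℝ)), (1 : ℝ)), (dualPair (-α') 1, (0 : ℝ))) ∈
        preqSpan L A' α' :=
      Submodule.subset_span (.inr (.inr rfl))
    simpa [← dualPair_add, ← sub_eq_add_neg] using add_mem lift_mem generator_mem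

theorem preq_span_independent_of_choice_general (hL : (splitForm ℝ E).orthogonal L ≤ L)
    (hα : α A = α' A')
    (hβ : ∀ (X : E) (ξ : Dual ℝ E), (X, ξ) ∈ L → α X + ξ A = α' X + ξ A') :
    preqSpan L A α = preqSpan L A' α' := by
  have sub_mem : (A' - A, α' - α) ∈ L := hL fun ⟨X, ξ⟩ hX ↦ by
    simp only [splitForm_apply, map_sub, LinearMap.sub_apply]
    linear_combination -hβ X ξ hX
  have sub_mem' : (A - A', α - α') ∈ L := by simpa using neg_mem sub_mem
  exact le_antisymm (preqSpan_le_of_sub_mem sub_mem hα hβ)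
    (preqSpan_le_of_sub_mem sub_mem' hα.symm fun X ξ hX ↦ (hβ X ξ hX).symm)

end Prequantization

/-- The prequantization subspace is independent of the choice of the isotropic
element `A ⊕ α` representing the functional `β`: if `α(A) = 0`, `α′(A′) = 0` and
`α(X) + ξ(A) = α′(X) + ξ(A′)` for all `X ⊕ ξ ∈ L`, the two spanned subspaces coincide. -/
theorem preq_span_independent_of_choice (L : Submodule ℝ (V × Module.Dual ℝ V))
    (hL : IsDirac L) (A A' : V) (α α' : Module.Dual ℝ V)
    (hα : α A = 0) (hα' : α' A' = 0)
    (hβ : ∀ (X : V) (ξ : Module.Dual ℝ V), (X, ξ) ∈ L → α X + ξ A = α' X + ξ A') :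
    preqSpan L A α = preqSpan L A' α' :=
  preq_span_independent_of_choice_general
    (orthogonal_le_of_maximal (isDirac_iff_maximal.1 hL)) (hα.trans hα'.symm) hβ
end
end

section
/- Fix n ≥ 1 and let M = ℝ × (Fin n → ℝ) × (Fin n → ℝ) × ℝ with points written x = (u, q, p, r). For smooth functions f, g : M → ℝ define {f, g} : M → ℝ by {f, g}(x) = r²(∂_r f · ∂_u g − ∂_u f · ∂_r g)(x) + r·Σᵢ pᵢ(∂_{pᵢ} f · ∂_u g − ∂_u f · ∂_{pᵢ} g)(x) + r·Σᵢ(∂_{qᵢ} f · ∂_{pᵢ} g − ∂_{pᵢ} f · ∂_{qᵢ} g)(x), where r and pᵢ denote the corresponding coordinates of x and ∂ denotes the partial (directional) derivative in the indicated coordinate direction. Then for all smooth f, g, h : M → ℝ the Jacobi identity {f, {g, h}} + {g, {h, f}} + {h, {f, g}} = 0 holds at every point of M. (Equivalently, the bivector field Λ = r[(r∂_r + Σᵢ pᵢ∂_{pᵢ}) ∧ ∂_u + Σᵢ ∂_{qᵢ} ∧ ∂_{pᵢ}], the LeBrun-Poisson structure associated to the standard contact structure, is a Poisson structure on all of M,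 including the locus r = 0.) -/
/-!
A bivector field `∑ a, A a ∧ B a` built from pairwise commuting vector fields is Poisson. Each
of these fields, say `V`, is an infinitesimal automorphism, `V {g, h} = {V g, h} + {g, V h}`, so
`{f, {g, h}} = H f g h - H f h g`, where `H f g h` contains no second derivatives other than those
of `g` and is symmetric in `f` and `h`. In the cyclic sum the six terms cancel in pairs.

Where `r ≠ 0`, the LeBrun-Poisson bracket is canonical in the coordinates `u`, `q`, `s = 1 / r`,
`P = p / r`. The coordinate fields `∂_u`, `∂_{qᵢ}`, `∂_s = -r(r∂_r + Σᵢ pᵢ∂_{pᵢ})` and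
`∂_{Pᵢ} = r∂_{pᵢ}` commute and extend smoothly across `r = 0`, and so does
`Λ = ∂_u ∧ ∂_s + Σᵢ ∂_{qᵢ} ∧ ∂_{Pᵢ}`.
-/

noncomputable section

open scoped BigOperators

/-- The manifold `M = ℝ × (Fin n → ℝ) × (Fin n → ℝ) × ℝ`, with points `x = (u, q, p, r)`. -/
abbrev LPSpace (n : ℕ) : Type := ℝ × (Fin n → ℝ) × (Fin n → ℝ) × ℝ

/-- The coordinate direction `∂/∂u`. -/
def eU (n : ℕ) : LPSpace n := (1, 0, 0, 0)

/-- The coordinate direction `∂/∂qᵢ`. -/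
def eQ (n : ℕ) (i : Fin n) : LPSpace n := (0, Pi.single i 1, 0, 0)

/-- The coordinate direction `∂/∂pᵢ`. -/
def eP (n : ℕ) (i : Fin n) : LPSpace n := (0, 0, Pi.single i 1, 0)

/-- The coordinate direction `∂/∂r`. -/
def eR (n : ℕ) : LPSpace n := (0, 0, 0, 1)

/-- The partial derivative of `f` at `x` in the direction `v`. -/
def pd {n : ℕ} (f : LPSpace n → ℝ) (x v : LPSpace n) : ℝ := fderiv ℝ f x v

/-- The LeBrun-Poisson bracket
`{f, g} = r²(∂_r f ∂_u g − ∂_u f ∂_r g) + r Σᵢ pᵢ(∂_{pᵢ} f ∂_u g − ∂_u f ∂_{pᵢ} g)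
  + r Σᵢ (∂_{qᵢ} f ∂_{pᵢ} g − ∂_{pᵢ} f ∂_{qᵢ} g)`,
the pairing of `df` and `dg` by the bivector
`Λ = r[(r∂_r + Σᵢ pᵢ ∂_{pᵢ}) ∧ ∂_u + Σᵢ ∂_{qᵢ} ∧ ∂_{pᵢ}]`. -/
def lpBracket {n : ℕ} (f g : LPSpace n → ℝ) (x : LPSpace n) : ℝ :=
  x.2.2.2 ^ 2 * (pd f x (eR n) * pd g x (eU n) - pd f x (eU n) * pd g x (eR n)) +
    x.2.2.2 * ∑ i : Fin n, x.2.2.1 i *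
      (pd f x (eP n i) * pd g x (eU n) - pd f x (eU n) * pd g x (eP n i)) +
    x.2.2.2 * ∑ i : Fin n,
      (pd f x (eQ n i) * pd g x (eP n i) - pd f x (eP n i) * pd g x (eQ n i))

open VectorField

section CommutingFields

variable {𝕜 E ι : Type*} [NontriviallyNormedField 𝕜] [NormedAddCommGroup E] [NormedSpace 𝕜 E]
  {A B : ι → E → E} {V W : E → E} {f g h : E → 𝕜} {x : E}

/-- The derivative `V f` of a scalar function `f` along a vector field `V`. -/
def derivAlong (V : E → E) (f : E → 𝕜) (x : E) : 𝕜 := fderiv 𝕜 f x (V x)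

lemma differentiableAt_derivAlong (hV : DifferentiableAt 𝕜 V x) (hf : ContDiffAt 𝕜 2 f x) :
    DifferentiableAt 𝕜 (derivAlong V f) x :=
  ((hf.fderiv_right (m := 1) (by norm_num)).differentiableAt one_ne_zero).clm_apply hV

lemma derivAlong_comm_of_lieBracket_eq_zero (hV : DifferentiableAt 𝕜 V x)
    (hW : DifferentiableAt 𝕜 W x) (hVW : lieBracket 𝕜 V W x = 0)
    (hf : ContDiffAt 𝕜 (minSmoothness 𝕜 2) f x) :
    derivAlong V (derivAlong W f) x = derivAlong W (derivAlong V f) x := by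
  have hcomm := fderiv_apply_lieBracket hf le_rfl hW hV
  rw [hVW, map_zero] at hcomm
  exact sub_eq_zero.mp hcomm.symm

variable (𝕜) in
/-- The vector fields `A a` and `B a` are differentiable at `x`, and all their Lie brackets vanish
there: the hypothesis on `A` and `B` for the bracket of `∑ a, A a ∧ B a` to satisfy the Jacobi
identity at `x`. -/
structure CommutingFieldsAt (A B : ι → E → E) (x : E) : Prop where
  differentiableAt_left (a : ι) : DifferentiableAt 𝕜 (A a) x
  differentiableAt_right (a : ι) : DifferentiableAt 𝕜 (B a) x
  lieBracket_left_left (a b : ι) : lieBracket 𝕜 (A a) (A b) x = 0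
  lieBracket_left_right (a b : ι) : lieBracket 𝕜 (A a) (B b) x = 0
  lieBracket_right_right (a b : ι) : lieBracket 𝕜 (B a) (B b) x = 0

lemma CommutingFieldsAt.lieBracket_right_left (hAB : CommutingFieldsAt 𝕜 A B x) (a b : ι) :
    lieBracket 𝕜 (B a) (A b) x = 0 := by
  rw [lieBracket_swap, hAB.lieBracket_left_right, neg_zero]

variable [Fintype ι]

/-- The bracket `{f, g}` given by the bivector field `∑ a, A a ∧ B a`. -/
def wedgeBracket (A B : ι → E → E) (f g : E → 𝕜) (x : E) : 𝕜 :=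
  ∑ a, (derivAlong (A a) f x * derivAlong (B a) g x -
    derivAlong (B a) f x * derivAlong (A a) g x)

lemma wedgeBracket_swap (A B : ι → E → E) (f g : E → 𝕜) (x : E) :
    wedgeBracket A B g f x = -wedgeBracket A B f g x := by
  simp only [wedgeBracket, ← Finset.sum_neg_distrib]
  exact Finset.sum_congr rfl fun a _ => by ring

lemma derivAlong_wedgeBracket (hA : ∀ a, DifferentiableAt 𝕜 (A a) x)
    (hB : ∀ a, DifferentiableAt 𝕜 (B a) x) (hV : DifferentiableAt 𝕜 V x)
    (hVA : ∀ a, lieBracket 𝕜 V (A a) x = 0) (hVB : ∀ a, lieBracket 𝕜 V (B a) x = 0)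
    (hg : ContDiffAt 𝕜 (minSmoothness 𝕜 2) g x) (hh : ContDiffAt 𝕜 (minSmoothness 𝕜 2) h x) :
    derivAlong V (wedgeBracket A B g h) x =
      wedgeBracket A B (derivAlong V g) h x + wedgeBracket A B g (derivAlong V h) x := by
  have hg₂ := hg.of_le le_minSmoothness
  have hh₂ := hh.of_le le_minSmoothness
  have hAg a := (differentiableAt_derivAlong (hA a) hg₂).hasFDerivAt
  have hBg a := (differentiableAt_derivAlong (hB a) hg₂).hasFDerivAt
  have hAh a := (differentiableAt_derivAlong (hA a) hh₂).hasFDerivAt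
  have hBh a := (differentiableAt_derivAlong (hB a) hh₂).hasFDerivAt
  have hderiv : HasFDerivAt (wedgeBracket A B g h) _ x := .fun_sum fun a _ =>
    ((hAg a).mul (hBh a)).sub ((hBg a).mul (hAh a))
  have hleibniz : derivAlong V (wedgeBracket A B g h) x = ∑ a,
      (derivAlong (A a) g x * derivAlong V (derivAlong (B a) h) x +
          derivAlong (B a) h x * derivAlong V (derivAlong (A a) g) x -
        (derivAlong (B a) g x * derivAlong V (derivAlong (A a) h) x +
          derivAlong (A a) h x * derivAlong V (derivAlong (B a) g) x)) := by
    rw [derivAlong, hderiv.fderiv]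
    simp [derivAlong]
  simp only [hleibniz, wedgeBracket, ← Finset.sum_add_distrib]
  refine Finset.sum_congr rfl fun a _ => ?_
  rw [derivAlong_comm_of_lieBracket_eq_zero hV (hA a) (hVA a) hg,
    derivAlong_comm_of_lieBracket_eq_zero hV (hA a) (hVA a) hh,
    derivAlong_comm_of_lieBracket_eq_zero hV (hB a) (hVB a) hg,
    derivAlong_comm_of_lieBracket_eq_zero hV (hB a) (hVB a) hh]
  ring

/-- The second-order expression `∑ a, (A a f * {B a g, h} - B a f * {A a g, h})`. Up to sign
it is the Hessian of `g`, formed with the derivatives along the fields `A a` and `B a`, evaluated on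
the Hamiltonian vectors of `f` and `h`. -/
def hamiltonianHessian (A B : ι → E → E) (f g h : E → 𝕜) (x : E) : 𝕜 :=
  ∑ a, (derivAlong (A a) f x * wedgeBracket A B (derivAlong (B a) g) h x -
    derivAlong (B a) f x * wedgeBracket A B (derivAlong (A a) g) h x)

lemma hamiltonianHessian_comm (hAB : CommutingFieldsAt 𝕜 A B x)
    (f h : E → 𝕜) (hg : ContDiffAt 𝕜 (minSmoothness 𝕜 2) g x) :
    hamiltonianHessian A B f g h x = hamiltonianHessian A B h g f x := by
  have hA := hAB.differentiableAt_left
  have hB := hAB.differentiableAt_right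
  simp only [hamiltonianHessian, wedgeBracket, Finset.mul_sum, ← Finset.sum_sub_distrib]
  rw [Finset.sum_comm]
  refine Finset.sum_congr rfl fun b _ => Finset.sum_congr rfl fun a _ => ?_
  rw [derivAlong_comm_of_lieBracket_eq_zero (hA a) (hA b) (hAB.lieBracket_left_left a b) hg,
    derivAlong_comm_of_lieBracket_eq_zero (hA a) (hB b) (hAB.lieBracket_left_right a b) hg,
    derivAlong_comm_of_lieBracket_eq_zero (hB b) (hB a) (hAB.lieBracket_right_right b a) hg,
    derivAlong_comm_of_lieBracket_eq_zero (hA b) (hB a) (hAB.lieBracket_left_right b a) hg]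
  ring

lemma wedgeBracket_wedgeBracket (hAB : CommutingFieldsAt 𝕜 A B x)
    (f : E → 𝕜) (hg : ContDiffAt 𝕜 (minSmoothness 𝕜 2) g x)
    (hh : ContDiffAt 𝕜 (minSmoothness 𝕜 2) h x) :
    wedgeBracket A B f (wedgeBracket A B g h) x =
      hamiltonianHessian A B f g h x - hamiltonianHessian A B f h g x := by
  have hA := hAB.differentiableAt_left
  have hB := hAB.differentiableAt_right
  rw [wedgeBracket, hamiltonianHessian, hamiltonianHessian, ← Finset.sum_sub_distrib]
  refine Finset.sum_congr rfl fun a _ => ?_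
  rw [derivAlong_wedgeBracket hA hB (hA a) (hAB.lieBracket_left_left a)
      (hAB.lieBracket_left_right a) hg hh,
    derivAlong_wedgeBracket hA hB (hB a) (hAB.lieBracket_right_left a)
      (hAB.lieBracket_right_right a) hg hh,
    wedgeBracket_swap A B (derivAlong (A a) h) g, wedgeBracket_swap A B (derivAlong (B a) h) g]
  ring

theorem wedgeBracket_jacobi (hAB : CommutingFieldsAt 𝕜 A B x)
    (hf : ContDiffAt 𝕜 (minSmoothness 𝕜 2) f x) (hg : ContDiffAt 𝕜 (minSmoothness 𝕜 2) g x)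
    (hh : ContDiffAt 𝕜 (minSmoothness 𝕜 2) h x) :
    wedgeBracket A B f (wedgeBracket A B g h) x + wedgeBracket A B g (wedgeBracket A B h f) x +
      wedgeBracket A B h (wedgeBracket A B f g) x = 0 := by
  rw [wedgeBracket_wedgeBracket hAB f hg hh,
    wedgeBracket_wedgeBracket hAB g hh hf,
    wedgeBracket_wedgeBracket hAB h hf hg,
    hamiltonianHessian_comm hAB f h hg,
    hamiltonianHessian_comm hAB f g hh,
    hamiltonianHessian_comm hAB g h hf]
  ring

end CommutingFields

section LeBrunPoisson

variable {n : ℕ}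

/-- The coordinate fields `∂_u` (index `none`) and `∂_{qᵢ}` (index `some i`), which are also the
position fields of the coordinates `(u, q, s, P)` with `s = 1 / r` and `P = p / r`. -/
def lpPositionField (n : ℕ) (a : Option (Fin n)) (_ : LPSpace n) : LPSpace n :=
  a.elim (eU n) (eQ n)

/-- The fields `∂_s = -r(r∂_r + Σᵢ pᵢ∂_{pᵢ})` (index `none`) and `∂_{Pᵢ} = r∂_{pᵢ}` (index `some i`)
of the coordinates `s = 1 / r`, `P = p / r`, extended to `r = 0`. -/
def lpMomentumField (n : ℕ) : Option (Fin n) → LPSpace n → LPSpace n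
  | none => fun x => x.2.2.2 • (0, 0, -x.2.2.1, -x.2.2.2)
  | some i => fun x => x.2.2.2 • eP n i

lemma differentiable_lpPositionField (a : Option (Fin n)) :
    Differentiable ℝ (lpPositionField n a) :=
  differentiable_const _

lemma differentiable_lpMomentumField (a : Option (Fin n)) :
    Differentiable ℝ (lpMomentumField n a) := by
  cases a <;> unfold lpMomentumField <;> fun_prop

lemma fderiv_lpPositionField (a : Option (Fin n)) (x : LPSpace n) :
    fderiv ℝ (lpPositionField n a) x = 0 :=
  fderiv_const_apply _

lemma fderiv_lpMomentumField_none (x v : LPSpace n) :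
    fderiv ℝ (lpMomentumField n none) x v =
      x.2.2.2 • (0, 0, -v.2.2.1, -v.2.2.2) + v.2.2.2 • (0, 0, -x.2.2.1, -x.2.2.2) := by
  unfold lpMomentumField
  rw [fderiv_fun_smul (by fun_prop) (by fun_prop)]
  simp (disch := fun_prop) [DifferentiableAt.fderiv_prodMk, fderiv.fst, fderiv.snd]

lemma fderiv_lpMomentumField_some (i : Fin n) (x v : LPSpace n) :
    fderiv ℝ (lpMomentumField n (some i)) x v = v.2.2.2 • eP n i := by
  unfold lpMomentumField
  simp (disch := fun_prop) [fderiv_fun_smul, fderiv.snd]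

lemma lieBracket_lpPositionField (a b : Option (Fin n)) (x : LPSpace n) :
    lieBracket ℝ (lpPositionField n a) (lpPositionField n b) x = 0 := by
  simp [lieBracket, fderiv_lpPositionField]

lemma lieBracket_lpPositionField_lpMomentumField (a b : Option (Fin n)) (x : LPSpace n) :
    lieBracket ℝ (lpPositionField n a) (lpMomentumField n b) x = 0 := by
  cases a <;> cases b <;>
    simp [lieBracket, fderiv_lpPositionField, fderiv_lpMomentumField_none,
      fderiv_lpMomentumField_some, lpPositionField, eU, eQ]

lemma lieBracket_lpMomentumField (a b : Option (Fin n)) (x : LPSpace n) :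
    lieBracket ℝ (lpMomentumField n a) (lpMomentumField n b) x = 0 := by
  cases a <;> cases b <;>
    simp only [lieBracket, fderiv_lpMomentumField_none, fderiv_lpMomentumField_some] <;>
    simp [lpMomentumField, eP, smul_smul, mul_comm]

lemma commutingFieldsAt_lpPositionField_lpMomentumField (x : LPSpace n) :
    CommutingFieldsAt ℝ (lpPositionField n) (lpMomentumField n) x where
  differentiableAt_left a := differentiable_lpPositionField a x
  differentiableAt_right a := differentiable_lpMomentumField a x
  lieBracket_left_left a b := lieBracket_lpPositionField a b x
  lieBracket_left_right a b := lieBracket_lpPositionField_lpMomentumField a b x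
  lieBracket_right_right a b := lieBracket_lpMomentumField a b x

lemma derivAlong_lpMomentumField_none (f : LPSpace n → ℝ) (x : LPSpace n) :
    derivAlong (lpMomentumField n none) f x =
      -(x.2.2.2 ^ 2 * pd f x (eR n) + x.2.2.2 * ∑ i, x.2.2.1 i * pd f x (eP n i)) := by
  have hp : ∑ i, x.2.2.1 i • eP n i = (0, 0, x.2.2.1, 0) := by
    ext <;> simp [eP, Prod.fst_sum, Prod.snd_sum, Finset.sum_apply, Pi.single_apply]
  have hfield : lpMomentumField n none x =
      -(x.2.2.2 ^ 2 • eR n + x.2.2.2 • ∑ i, x.2.2.1 i • eP n i) := by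
    simp [hp, lpMomentumField, eR, sq]
  simp [derivAlong, pd, hfield]

lemma derivAlong_lpMomentumField_some (i : Fin n) (f : LPSpace n → ℝ) (x : LPSpace n) :
    derivAlong (lpMomentumField n (some i)) f x = x.2.2.2 * pd f x (eP n i) := by
  simp [derivAlong, lpMomentumField, pd]

lemma lpBracket_eq_wedgeBracket (f g : LPSpace n → ℝ) :
    lpBracket f g = wedgeBracket (lpPositionField n) (lpMomentumField n) f g := by
  ext x
  have hu (k : LPSpace n → ℝ) : derivAlong (lpPositionField n none) k x = pd k x (eU n) := rfl
  have hq (k : LPSpace n → ℝ) (i : Fin n) :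
      derivAlong (lpPositionField n (some i)) k x = pd k x (eQ n i) := rfl
  simp only [lpBracket, wedgeBracket, Fintype.sum_option, hu, hq, derivAlong_lpMomentumField_none,
    derivAlong_lpMomentumField_some, mul_sub, Finset.sum_sub_distrib, Finset.mul_sum,
    Finset.sum_mul, mul_add, add_mul, mul_neg, neg_mul]
  ring_nf

end LeBrunPoisson

theorem lpBracket_jacobi_identity_general {n : ℕ} {f g h : LPSpace n → ℝ} {x : LPSpace n}
    (hf : ContDiffAt ℝ 2 f x) (hg : ContDiffAt ℝ 2 g x) (hh : ContDiffAt ℝ 2 h x) :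
    lpBracket f (lpBracket g h) x + lpBracket g (lpBracket h f) x +
      lpBracket h (lpBracket f g) x = 0 := by
  rw [← minSmoothness_of_isRCLikeNormedField (𝕜 := ℝ) (n := 2)] at hf hg hh
  simp only [lpBracket_eq_wedgeBracket]
  exact wedgeBracket_jacobi (commutingFieldsAt_lpPositionField_lpMomentumField x) hf hg hh

/-- The LeBrun-Poisson bracket satisfies the Jacobi identity at every point
of `M`, including the locus `r = 0`; i.e. the bivector
`Λ = r[(r∂_r + Σᵢ pᵢ∂_{pᵢ}) ∧ ∂_u + Σᵢ ∂_{qᵢ} ∧ ∂_{pᵢ}]` is a Poisson structure on all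
of `M`. -/
theorem lpBracket_jacobi_identity (n : ℕ) (hn : 1 ≤ n) (f g h : LPSpace n → ℝ)
    (hf : ContDiff ℝ (⊤ : ℕ∞) f) (hg : ContDiff ℝ (⊤ : ℕ∞) g) (hh : ContDiff ℝ (⊤ : ℕ∞) h) (x : LPSpace n) :
    lpBracket f (lpBracket g h) x + lpBracket g (lpBracket h f) x +
      lpBracket h (lpBracket f g) x = 0 := by
  have two_le : (2 : WithTop ℕ∞) ≤ (⊤ : ℕ∞) := ENat.LEInfty.out
  exact lpBracket_jacobi_identity_general (hf.of_le two_le).contDiffAt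
    (hg.of_le two_le).contDiffAt (hh.of_le two_le).contDiffAt
end
end

section
/- Fix n ≥ 0 and let M = ℝ × (Fin n → ℝ) × (Fin n → ℝ) × ℝ with points x = (u, q, p, s), and let ω_x be the skew bilinear form ω_x(v, w) = v_s σ_x(w) − w_s σ_x(v) + s Σᵢ((v_p)ᵢ (w_q)ᵢ − (v_q)ᵢ (w_p)ᵢ), where σ_x(v) = v_u + Σᵢ pᵢ (v_q)ᵢ. Let f : M → ℝ be a smooth function which is constant on the hypersurface {s = 0} (i.e. there is c ∈ ℝ with f(x) = c whenever x_s = 0). Then f is admissible: there exists a smooth vector field X : M → ℝ × (Fin n → ℝ) × (Fin n → ℝ) × ℝ such that ω_x(X(x), v) = df_x(v) for every x ∈ M and every vector v. -/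
noncomputable section

open scoped BigOperators

/-- The manifold `M = ℝ × (Fin n → ℝ) × (Fin n → ℝ) × ℝ`, with points `x = (u, q, p, s)`
and tangent vectors `v = (v_u, v_q, v_p, v_s)`. -/
abbrev CSpace (n : ℕ) : Type := ℝ × (Fin n → ℝ) × (Fin n → ℝ) × ℝ

/-- The contact form `σ = du + Σᵢ pᵢ dqᵢ` evaluated at the point `x` on the vector `v`:
`σ_x(v) = v_u + Σᵢ pᵢ (v_q)ᵢ`. -/
def sigmaForm {n : ℕ} (x v : CSpace n) : ℝ := v.1 + ∑ i : Fin n, x.2.2.1 i * v.2.1 i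

/-- The 2-form `ω = d(sσ) = ds ∧ σ + s dσ` at the point `x`:
`ω_x(v, w) = v_s σ_x(w) − w_s σ_x(v) + s Σᵢ((v_p)ᵢ (w_q)ᵢ − (v_q)ᵢ (w_p)ᵢ)`. -/
def omegaForm {n : ℕ} (x v w : CSpace n) : ℝ :=
  v.2.2.2 * sigmaForm x w - w.2.2.2 * sigmaForm x v +
    x.2.2.2 * ∑ i : Fin n, (v.2.2.1 i * w.2.1 i - v.2.1 i * w.2.2.1 i)

/-!
If `f = c` on `{s = 0}`, Hadamard's lemma gives `f = c + s g` with `g` smooth, so that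
`df = s dg + g ds`. Although `v ↦ ω_x(v, ·)` degenerates at `s = 0`, every covector of the form
`s α + a ds` is the image of a vector depending smoothly on `(x, a, α)`: writing
`ω_x(v, ·) = v_s σ - σ(v) ds + s Σᵢ ((v_p)ᵢ dqᵢ - (v_q)ᵢ dpᵢ)` and comparing coefficients, the
only divisions are by `s`, and they cancel. Take `α = dg` and `a = g`.
-/

section ParametricIntegral

theorem exists_nhds_forall_norm_le_of_isCompact {X Y E : Type*} [TopologicalSpace X]
    [TopologicalSpace Y] [SeminormedAddCommGroup E] {f : X × Y → E} (hf : Continuous f)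
    {K : Set Y} (hK : IsCompact K) (x₀ : X) :
    ∃ U ∈ nhds x₀, ∃ C : ℝ, ∀ x ∈ U, ∀ y ∈ K, ‖f (x, y)‖ ≤ C := by
  obtain ⟨C, hC⟩ := (isCompact_singleton.prod hK).exists_bound_of_continuousOn
    (s := {x₀} ×ˢ K) hf.continuousOn
  have hopen : IsOpen {z | ‖f z‖ < C + 1} := isOpen_lt hf.norm continuous_const
  obtain ⟨U, V, hU, -, hx₀U, hKV, hUV⟩ := generalized_tube_lemma isCompact_singleton hK hopen
    fun z hz => (hC z hz).trans_lt (lt_add_one C)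
  exact ⟨U, hU.mem_nhds (hx₀U rfl), C + 1, fun x hx y hy => (hUV ⟨hx, hKV hy⟩).le⟩

variable {H E : Type*} [NormedAddCommGroup H] [NormedSpace ℝ H]
  [NormedAddCommGroup E] [NormedSpace ℝ E]

theorem hasFDerivAt_intervalIntegral_of_continuous {F : H → ℝ → E} {F' : H → ℝ → H →L[ℝ] E}
    (hF : ∀ x, Continuous (F x)) (hF' : Continuous F'.uncurry)
    (hderiv : ∀ x t, HasFDerivAt (F · t) (F' x t) x) (a b : ℝ) (x₀ : H) :
    HasFDerivAt (fun x => ∫ t in a..b, F x t) (∫ t in a..b, F' x₀ t) x₀ := by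
  obtain ⟨U, hU, C, hC⟩ := exists_nhds_forall_norm_le_of_isCompact hF' isCompact_uIcc x₀
  refine intervalIntegral.hasFDerivAt_integral_of_dominated_of_fderiv_le (bound := fun _ => C) hU
    (.of_forall fun x => (hF x).aestronglyMeasurable) ((hF x₀).intervalIntegrable a b)
    (hF'.uncurry_left x₀).aestronglyMeasurable ?_ intervalIntegrable_const
    (.of_forall fun t _ x _ => hderiv x t)
  exact .of_forall fun t ht x hx => hC x hx t (Set.uIoc_subset_uIcc ht)

theorem hasFDerivAt_intervalIntegral_of_contDiff {F : H → ℝ → E}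
    (hF : ContDiff ℝ 1 F.uncurry) (a b : ℝ) (x₀ : H) :
    HasFDerivAt (fun x => ∫ t in a..b, F x t)
      (∫ t in a..b, (fderiv ℝ F.uncurry (x₀, t)).comp (.inl ℝ H ℝ)) x₀ := by
  refine hasFDerivAt_intervalIntegral_of_continuous
    (F' := fun x t => (fderiv ℝ F.uncurry (x, t)).comp (.inl ℝ H ℝ))
    hF.continuous.uncurry_left ?_ (fun x t => ?_) a b x₀
  · exact (hF.continuous_fderiv one_ne_zero).clm_comp continuous_const
  · have hFxt : HasFDerivAt F.uncurry (fderiv ℝ F.uncurry (x, t)) (x, t) :=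
      (hF.differentiable one_ne_zero _).hasFDerivAt
    exact hFxt.comp (f := fun y => (y, t)) x (hasFDerivAt_prodMk_left x t)

variable [FiniteDimensional ℝ H]

theorem contDiff_nat_intervalIntegral (k : ℕ) {F : H → ℝ → E} (hF : ContDiff ℝ k F.uncurry)
    (a b : ℝ) : ContDiff ℝ k (fun x => ∫ t in a..b, F x t) := by
  induction k generalizing F with
  | zero =>
    exact contDiff_zero.2
      (intervalIntegral.continuous_parametric_intervalIntegral_of_continuous' hF.continuous a b)
  | succ k ih =>
    push_cast at hF ⊢
    have hF₁ : ContDiff ℝ 1 F.uncurry := hF.of_le le_add_self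
    have hderiv := hasFDerivAt_intervalIntegral_of_contDiff hF₁ a b
    refine contDiff_succ_iff_fderiv_apply.2
      ⟨fun x => (hderiv x).differentiableAt, by simp, fun y => ?_⟩
    have hint (x : H) : IntervalIntegrable
        (fun t => (fderiv ℝ F.uncurry (x, t)).comp (.inl ℝ H ℝ)) MeasureTheory.volume a b :=
      (((hF₁.continuous_fderiv one_ne_zero).comp (.prodMk_right x)).clm_comp
        continuous_const).intervalIntegrable a b
    have hfderiv (x : H) : fderiv ℝ (fun x => ∫ t in a..b, F x t) x y =
        ∫ t in a..b, fderiv ℝ F.uncurry (x, t) (y, 0) := by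
      rw [(hderiv x).fderiv, ContinuousLinearMap.intervalIntegral_apply (hint x)]
      rfl
    simp only [hfderiv]
    exact ih ((hF.fderiv_right le_rfl).clm_apply contDiff_const)

theorem contDiff_intervalIntegral {m : ℕ∞} {F : H → ℝ → E} (hF : ContDiff ℝ m F.uncurry)
    (a b : ℝ) : ContDiff ℝ m (fun x => ∫ t in a..b, F x t) :=
  contDiff_iff_forall_nat_le.2 fun k hk =>
    contDiff_nat_intervalIntegral k (hF.of_le (mod_cast hk)) a b

end ParametricIntegral

section Hadamard

theorem fderiv_const_add_clm_mul {E : Type*} [NormedAddCommGroup E] [NormedSpace ℝ E]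
    (l : E →L[ℝ] ℝ) {g : E → ℝ} {x : E} (hg : DifferentiableAt ℝ g x) (c : ℝ) :
    fderiv ℝ (fun y => c + l y * g y) x = l x • fderiv ℝ g x + g x • l :=
  ((l.hasFDerivAt.mul hg.hasFDerivAt).const_add c).fderiv

variable {E F : Type*} [NormedAddCommGroup E] [NormedSpace ℝ E]
  [NormedAddCommGroup F] [NormedSpace ℝ F] [CompleteSpace F]

theorem integral_fderiv_apply_eq_sub {f : E → F} (hf : ContDiff ℝ 1 f) (x v : E) :
    ∫ t in (0 : ℝ)..1, fderiv ℝ f (x + t • v) v = f (x + v) - f x := by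
  have hline (t : ℝ) : HasDerivAt (fun t : ℝ => x + t • v) v t := by
    simpa using ((hasDerivAt_id t).smul_const v).const_add x
  have hderiv (t : ℝ) : HasDerivAt (fun t : ℝ => f (x + t • v)) (fderiv ℝ f (x + t • v) v) t :=
    (hf.differentiable one_ne_zero _).hasFDerivAt.comp_hasDerivAt t (hline t)
  have hcont : Continuous fun t : ℝ => fderiv ℝ f (x + t • v) v :=
    ((hf.continuous_fderiv one_ne_zero).comp (by fun_prop)).clm_apply continuous_const
  simpa using intervalIntegral.integral_eq_sub_of_hasDerivAt (fun t _ => hderiv t)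
    (hcont.intervalIntegrable 0 1)

variable [FiniteDimensional ℝ E]

theorem exists_contDiff_eq_add_smul {m : ℕ∞} {f : E → F} (hf : ContDiff ℝ (m + 1) f)
    (l : E →L[ℝ] ℝ) (e : E) :
    ∃ g : E → F, ContDiff ℝ m g ∧ ∀ x, f x = f (x - l x • e) + l x • g x := by
  refine ⟨fun x => ∫ t in (0 : ℝ)..1, fderiv ℝ f (x - l x • e + t • l x • e) e,
    contDiff_intervalIntegral ?_ 0 1, fun x => ?_⟩
  · exact ((hf.fderiv_right le_rfl).comp (g := fderiv ℝ f)
      (f := fun z : E × ℝ => z.1 - l z.1 • e + z.2 • l z.1 • e) (by fun_prop)).clm_apply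
      contDiff_const
  · have hftc := integral_fderiv_apply_eq_sub (hf.of_le le_add_self) (x - l x • e) (l x • e)
    simp only [map_smul, intervalIntegral.integral_smul, sub_add_cancel] at hftc ⊢
    rw [hftc, add_sub_cancel]

theorem exists_contDiff_eq_const_add_smul_of_eq_on_ker {m : ℕ∞} {f : E → F}
    (hf : ContDiff ℝ (m + 1) f) (l : E →L[ℝ] ℝ) {c : F} (hc : ∀ x, l x = 0 → f x = c) :
    ∃ g : E → F, ContDiff ℝ m g ∧ ∀ x, f x = c + l x • g x := by
  obtain rfl | hl := eq_or_ne l 0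
  · exact ⟨0, contDiff_const, fun x => by simpa using hc x rfl⟩
  obtain ⟨e, he⟩ : ∃ e, l e = 1 := LinearMap.surjective (f := l.toLinearMap) (mod_cast hl) 1
  obtain ⟨g, hg, hfg⟩ := exists_contDiff_eq_add_smul hf l e
  exact ⟨g, hg, fun x => by rw [← hc (x - l x • e) (by simp [he]), ← hfg]⟩

end Hadamard

namespace CSpace

variable {n : ℕ}

/-- The boundary defining function `s`, as a linear functional; being linear, it also stands for
its differential `ds`. -/
def sCoord (n : ℕ) : CSpace n →L[ℝ] ℝ :=
  .comp (.snd ℝ (Fin n → ℝ) ℝ) (.comp (.snd ℝ (Fin n → ℝ) _) (.snd ℝ ℝ _))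

theorem sCoord_apply (v : CSpace n) : sCoord n v = v.2.2.2 := rfl

/-- The coordinate vector `∂/∂u`. -/
def eU : CSpace n := (1, 0, 0, 0)

/-- The coordinate vector `∂/∂qᵢ`. -/
def eQ (i : Fin n) : CSpace n := (0, Pi.single i 1, 0, 0)

/-- The coordinate vector `∂/∂pᵢ`. -/
def eP (i : Fin n) : CSpace n := (0, 0, Pi.single i 1, 0)

/-- The coordinate vector `∂/∂s`. -/
def eS : CSpace n := (0, 0, 0, 1)

theorem eq_sum_coord_smul (v : CSpace n) :
    v = v.1 • eU + ∑ i, v.2.1 i • eQ i + ∑ i, v.2.2.1 i • eP i + v.2.2.2 • eS := by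
  ext j <;> simp [eU, eQ, eP, eS, Prod.fst_sum, Prod.snd_sum, Pi.single_apply]

theorem clm_apply_eq_sum_coord (α : CSpace n →L[ℝ] ℝ) (v : CSpace n) :
    α v = v.1 * α eU + ∑ i, v.2.1 i * α (eQ i) + ∑ i, v.2.2.1 i * α (eP i) + v.2.2.2 * α eS := by
  conv_lhs => rw [eq_sum_coord_smul v]
  simp only [map_add, map_sum, map_smul, smul_eq_mul]

/-- The vector `v` with `ω_x(v, ·) = s α + a ds`. It is the unique one where `s ≠ 0`, and its
formula extends polynomially across `s = 0`. -/
def omegaSharp (x : CSpace n) (a : ℝ) (α : CSpace n →L[ℝ] ℝ) : CSpace n :=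
  (∑ i, x.2.2.1 i * α (eP i) - (x.2.2.2 * α eS + a),
    fun i => -α (eP i),
    fun i => α (eQ i) - x.2.2.1 i * α eU,
    x.2.2.2 * α eU)

theorem sigmaForm_omegaSharp (x : CSpace n) (a : ℝ) (α : CSpace n →L[ℝ] ℝ) :
    sigmaForm x (omegaSharp x a α) = -(x.2.2.2 * α eS + a) := by
  simp only [sigmaForm, omegaSharp, mul_neg, Finset.sum_neg_distrib]
  ring

theorem omegaForm_omegaSharp (x : CSpace n) (a : ℝ) (α : CSpace n →L[ℝ] ℝ) (v : CSpace n) :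
    omegaForm x (omegaSharp x a α) v = (x.2.2.2 • α + a • sCoord n) v := by
  have hdσ : ∑ i, ((α (eQ i) - x.2.2.1 i * α eU) * v.2.1 i - -α (eP i) * v.2.2.1 i) =
      ∑ i, v.2.1 i * α (eQ i) + ∑ i, v.2.2.1 i * α (eP i)
        - α eU * ∑ i, x.2.2.1 i * v.2.1 i := by
    rw [Finset.mul_sum, ← Finset.sum_add_distrib, ← Finset.sum_sub_distrib]
    exact Finset.sum_congr rfl fun i _ => by ring
  calc omegaForm x (omegaSharp x a α) v
      = x.2.2.2 * α eU * (v.1 + ∑ i, x.2.2.1 i * v.2.1 i) + v.2.2.2 * (x.2.2.2 * α eS + a)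
          + x.2.2.2 * (∑ i, v.2.1 i * α (eQ i) + ∑ i, v.2.2.1 i * α (eP i)
            - α eU * ∑ i, x.2.2.1 i * v.2.1 i) := by
        rw [omegaForm, sigmaForm_omegaSharp, ← hdσ]
        simp only [omegaSharp, sigmaForm]
        ring
    _ = x.2.2.2 * (v.1 * α eU + ∑ i, v.2.1 i * α (eQ i) + ∑ i, v.2.2.1 i * α (eP i)
          + v.2.2.2 * α eS) + a * v.2.2.2 := by ring
    _ = (x.2.2.2 • α + a • sCoord n) v := by
        simp only [← clm_apply_eq_sum_coord, add_apply, smul_apply, sCoord_apply, smul_eq_mul]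

theorem contDiff_omegaSharp {m : WithTop ℕ∞} :
    ContDiff ℝ m fun z : CSpace n × ℝ × (CSpace n →L[ℝ] ℝ) => omegaSharp z.1 z.2.1 z.2.2 := by
  unfold omegaSharp
  fun_prop

end CSpace

open CSpace

theorem constant_on_boundary_admissible_general (n : ℕ) (m : ℕ∞) (f : CSpace n → ℝ)
    (hf : ContDiff ℝ (m + 2) f) (hconst : ∃ c : ℝ, ∀ x : CSpace n, x.2.2.2 = 0 → f x = c) :
    ∃ X : CSpace n → CSpace n, ContDiff ℝ m X ∧
      ∀ (x v : CSpace n), omegaForm x (X x) v = fderiv ℝ f x v := by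
  obtain ⟨c, hc⟩ := hconst
  obtain ⟨g, hg, hfg⟩ : ∃ g, ContDiff ℝ (m + 1 : ℕ∞) g ∧ ∀ x, f x = c + sCoord n x * g x :=
    exists_contDiff_eq_const_add_smul_of_eq_on_ker
      (hf.of_le (by push_cast; rw [add_assoc, one_add_one_eq_two])) (sCoord n) hc
  push_cast at hg
  refine ⟨fun x => omegaSharp x (g x) (fderiv ℝ g x), ?_, fun x v => ?_⟩
  · exact contDiff_omegaSharp.comp
      (contDiff_id.prodMk ((hg.of_le le_self_add).prodMk (hg.fderiv_right le_rfl)))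
  · rw [omegaForm_omegaSharp, funext hfg,
      fderiv_const_add_clm_mul (sCoord n) (hg.differentiable (by simp) x), sCoord_apply]

/-- Every smooth function on `M` which is constant on the hypersurface
`{s = 0}` is admissible for the presymplectic form `ω = d(sσ)`: it has a smooth
hamiltonian vector field `X` with `ω_x(X(x), ·) = df_x`. -/
theorem constant_on_boundary_admissible (n : ℕ) (f : CSpace n → ℝ)
    (hf : ContDiff ℝ (⊤ : ℕ∞) f) (hconst : ∃ c : ℝ, ∀ x : CSpace n, x.2.2.2 = 0 → f x = c) :
    ∃ X : CSpace n → CSpace n, ContDiff ℝ (⊤ : ℕ∞) X ∧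
      ∀ (x v : CSpace n), omegaForm x (X x) v = fderiv ℝ f x v :=
  constant_on_boundary_admissible_general n ⊤ f hf hconst
end
end
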